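/- (Intermediate value lemma in H¹.) Let R > 0 and let u : B_R → ℝ be continuously differentiable on B_R with ∇u square-integrable over B_R. Then for all real numbers k ≤ l: (l−k) · |{x ∈ B_R : u(x) ≤ k}| · |{x ∈ B_R : u(x) ≥ l}| ≤ R · |B_R| · |{x ∈ B_R : k < u(x) < l}|^{1/2} · ( ∫_{B_R ∩ {u > k}} |∇u(x)|² dx )^{1/2}. -/

import Mathlib

open MeasureTheory Metric Set

noncomputable section

/-- `Euc d` is `ℝ^d` with the Euclidean structure. -/
abbrev Euc (d : ℕ) := EuclideanSpace ℝ (Fin d)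

/-!
If `X` and `Y` are independent standard Gaussian vectors, then so are `cos θ • X + sin θ • Y` and
its `θ`-derivative. A function `g` must cross the slab `{k < g < l}` along this arc, for `θ` from
`0` to `π / 2`, whenever `g X ≤ k` and `l ≤ g Y` or vice versa. Averaging over `X` and `Y`, and
using `𝔼 |⟪v, Y⟫| ≤ ‖v‖`, gives
`2 (l - k) ℙ(g ≤ k) ℙ(l ≤ g) ≤ (π / 2) 𝔼[‖∇g‖; k < g < l]`.

To pass from Gaussian measure to the ball `B_R` of `E`, take `X` in `E × ℂ` and
`g p = u (R • p.fst / ‖p‖)`. By a theorem of Archimedes, `R • X.fst / ‖X‖` is uniform on `B_R` and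
independent of `‖X‖`. Moreover `‖∇g‖ ≤ (R / ‖p‖) ‖∇u‖` and `𝔼 ‖X‖⁻¹ ≤ 1`, so that the same
inequality holds on `B_R` with the constant `π / 4 ≤ 1`. The Cauchy–Schwarz inequality on the slab
concludes.
-/

open ProbabilityTheory Module
open ContinuousLinearMap (rotation)

lemma measurableSet_inter_preimage_of_continuousOn {α β : Type*} [TopologicalSpace α]
    [MeasurableSpace α] [OpensMeasurableSpace α] [TopologicalSpace β] [MeasurableSpace β]
    [BorelSpace β] {f : α → β} {U : Set α} {s : Set β}
    (hf : ContinuousOn f U) (hU : MeasurableSet U) (hs : MeasurableSet s) :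
    MeasurableSet (U ∩ f ⁻¹' s) := by
  rw [← Subtype.image_preimage_coe]
  exact hU.subtype_image (hf.domRestrict.measurable hs)

lemma ofReal_sub_le_lintegral_enorm_deriv {f f' : ℝ → ℝ} {a b k l : ℝ}
    (hf : ∀ t ∈ uIcc a b, HasDerivAt f (f' t) t) (ha : f a ≤ k) (hb : l ≤ f b) :
    ENNReal.ofReal (l - k) ≤ ∫⁻ t in uIcc a b ∩ f ⁻¹' Ioo k l, ‖f' t‖ₑ := by
  have hcont : ContinuousOn f (uIcc a b) := fun t ht => (hf t ht).continuousAt.continuousWithinAt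
  have hmeas : MeasurableSet (uIcc a b ∩ f ⁻¹' Ioo k l) :=
    measurableSet_inter_preimage_of_continuousOn hcont measurableSet_uIcc measurableSet_Ioo
  have himage : Ioo k l ⊆ f '' (uIcc a b ∩ f ⁻¹' Ioo k l) := by
    intro y hy
    obtain ⟨t, ht, rfl⟩ := intermediate_value_uIcc hcont
      (Icc_subset_uIcc ⟨ha.trans hy.1.le, hy.2.le.trans hb⟩)
    exact mem_image_of_mem f ⟨ht, hy⟩
  calc ENNReal.ofReal (l - k) = volume (Ioo k l) := Real.volume_Ioo.symm
    _ ≤ volume (f '' (uIcc a b ∩ f ⁻¹' Ioo k l)) := measure_mono himage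
    _ ≤ ∫⁻ t in uIcc a b ∩ f ⁻¹' Ioo k l,
          ENNReal.ofReal |(ContinuousLinearMap.toSpanSingleton ℝ (f' t)).det| :=
        addHaar_image_le_lintegral_abs_det_fderiv volume hmeas
          fun t ht => (hf t ht.1).hasFDerivAt.hasFDerivWithinAt
    _ = ∫⁻ t in uIcc a b ∩ f ⁻¹' Ioo k l, ‖f' t‖ₑ := by
        simp only [ContinuousLinearMap.det_toSpanSingleton, Real.enorm_eq_ofReal_abs]

lemma lintegral_comp_smul {E : Type*} [NormedAddCommGroup E] [NormedSpace ℝ E]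
    [FiniteDimensional ℝ E] [MeasurableSpace E] [BorelSpace E] (μ : Measure E)
    [μ.IsAddHaarMeasure] (f : E → ENNReal) {c : ℝ} (hc : c ≠ 0) :
    ∫⁻ x, f (c • x) ∂μ = ENNReal.ofReal |(c ^ finrank ℝ E)⁻¹| * ∫⁻ x, f x ∂μ := by
  rw [← smul_eq_mul, ← lintegral_smul_measure, ← Measure.map_addHaar_smul μ hc]
  exact (lintegral_map_equiv f (Homeomorph.smulOfNeZero c hc).toMeasurableEquiv).symm

lemma lintegral_Ioi_mul_comp_sq (ψ : ℝ → ENNReal) :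
    2 * ∫⁻ r in Ioi 0, ENNReal.ofReal r * ψ (r ^ 2) = ∫⁻ s in Ioi 0, ψ s := by
  have himage : (fun r : ℝ => r ^ 2) '' Ioi 0 = Ioi 0 := by
    ext s
    refine ⟨?_, fun hs => ⟨√s, Real.sqrt_pos.2 hs, Real.sq_sqrt (le_of_lt hs)⟩⟩
    rintro ⟨r, hr : 0 < r, rfl⟩
    exact pow_pos hr 2
  have hinj : InjOn (fun r : ℝ => r ^ 2) (Ioi 0) := fun r hr s hs h =>
    (pow_left_inj₀ (le_of_lt hr) (le_of_lt hs) two_ne_zero).1 h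
  rw [← lintegral_const_mul' _ _ ENNReal.ofNat_ne_top]
  conv_rhs => rw [← himage]
  rw [lintegral_image_eq_lintegral_abs_deriv_mul measurableSet_Ioi
    (fun r _ => (hasDerivAt_pow 2 r).hasDerivWithinAt) hinj]
  refine setLIntegral_congr_fun measurableSet_Ioi fun r (hr : 0 < r) => ?_
  simp [abs_of_pos hr, ENNReal.ofReal_mul, mul_assoc]

lemma lintegral_comp_norm_sq_complex {ψ : ℝ → ENNReal} (hψ : Measurable ψ) :
    ∫⁻ w : ℂ, ψ (‖w‖ ^ 2) = ENNReal.ofReal Real.pi * ∫⁻ s in Ioi 0, ψ s := by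
  calc ∫⁻ w : ℂ, ψ (‖w‖ ^ 2)
      = ∫⁻ q in Ioi (0 : ℝ) ×ˢ Ioo (-Real.pi) Real.pi, ENNReal.ofReal q.1 * ψ (q.1 ^ 2) := by
        rw [← Complex.lintegral_comp_polarCoord_symm, polarCoord_target]
        simp only [Complex.norm_polarCoord_symm, sq_abs, smul_eq_mul]
    _ = ∫⁻ r in Ioi (0 : ℝ), ENNReal.ofReal r * ψ (r ^ 2) * ENNReal.ofReal (2 * Real.pi) := by
        rw [Measure.volume_eq_prod, setLIntegral_prod _ (by fun_prop)]
        simp only [setLIntegral_const, Real.volume_Ioo, sub_neg_eq_add, two_mul]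
    _ = ENNReal.ofReal Real.pi * ∫⁻ s in Ioi 0, ψ s := by
        rw [lintegral_mul_const' _ _ ENNReal.ofReal_ne_top, ← lintegral_Ioi_mul_comp_sq ψ,
          ENNReal.ofReal_mul zero_le_two, ENNReal.ofReal_ofNat]
        ring

lemma lintegral_Ioi_comp_add_left (f : ℝ → ENNReal) (a : ℝ) :
    ∫⁻ s in Ioi 0, f (a + s) = ∫⁻ τ in Ioi a, f τ := by
  have h := (measurePreserving_add_left volume a).setLIntegral_comp_preimage_emb
    (measurableEmbedding_addLeft a) f (Ioi a)
  simpa using h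

lemma integral_Ioi_pow_mul_exp_neg_sq_mul_rpow {n : ℕ} (hn : 1 ≤ n) {s : ℝ} (hs : -(n : ℝ) < s) :
    ∫ y in Ioi (0 : ℝ), y ^ (n - 1) * (Real.exp (-y ^ 2 / 2) * y ^ s)
      = 2 ^ ((n + s) / 2) / 2 * Real.Gamma ((n + s) / 2) := by
  have h := integral_rpow_mul_exp_neg_mul_rpow (p := 2) (q := n + s - 1) (b := 1 / 2)
    two_pos (by linarith) (by norm_num)
  rw [sub_add_cancel, neg_div, Real.rpow_neg (by norm_num), one_div, Real.inv_rpow zero_le_two,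
    inv_inv, ← div_eq_mul_inv] at h
  rw [← h]
  refine setIntegral_congr_fun measurableSet_Ioi fun y (hy : 0 < y) => ?_
  have hpow : y ^ (n + s - 1) = y ^ (n - 1) * y ^ s := by
    rw [← Real.rpow_natCast, ← Real.rpow_add hy, Nat.cast_sub hn]
    ring_nf
  simp only [hpow, Real.rpow_two]
  ring_nf

lemma sup_span_singleton_ne_top {K V : Type*} [DivisionRing K] [AddCommGroup V] [Module K V]
    [FiniteDimensional K V] {W : Submodule K V} (hW : 2 ≤ finrank K (V ⧸ W)) (x : V) :
    W ⊔ Submodule.span K {x} ≠ ⊤ := by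
  intro htop
  have hquot := W.finrank_quotient_add_finrank
  have hsup := Submodule.finrank_add_le_finrank_add_finrank W (Submodule.span K {x})
  have hspan : finrank K (Submodule.span K {x}) ≤ 1 := finrank_span_le_card {x}
  rw [htop, finrank_top] at hsup
  omega

section Rotation

variable {V : Type*} [NormedAddCommGroup V] [NormedSpace ℝ V]

lemma hasDerivAt_rotation_fst (z : V × V) (θ : ℝ) :
    HasDerivAt (fun θ => (rotation θ z).1) (rotation θ z).2 θ :=
  ((Real.hasDerivAt_cos θ).smul_const z.1).add ((Real.hasDerivAt_sin θ).smul_const z.2)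

lemma continuous_uncurry_rotation :
    Continuous fun q : (V × V) × ℝ => rotation q.2 q.1 := by
  simp only [ContinuousLinearMap.rotation_apply]
  fun_prop

lemma rotation_fst_notMem {W : Submodule ℝ V} {z : V × V} (hfst : z.1 ∉ W)
    (hsnd : z.2 ∉ W ⊔ Submodule.span ℝ {z.1}) (θ : ℝ) : (rotation θ z).1 ∉ W := by
  intro (hmem : Real.cos θ • z.1 + Real.sin θ • z.2 ∈ W)
  rcases eq_or_ne (Real.sin θ) 0 with hsin | hsin
  · have hcos : Real.cos θ ≠ 0 := fun hcos => by
      simpa [hsin, hcos] using Real.sin_sq_add_cos_sq θ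
    rw [hsin, zero_smul, add_zero] at hmem
    exact hfst ((W.smul_mem_iff hcos).1 hmem)
  · refine hsnd ((Submodule.smul_mem_iff _ hsin).1 ?_)
    rw [← add_sub_cancel_left (Real.cos θ • z.1) (Real.sin θ • z.2)]
    exact Submodule.sub_mem _ (Submodule.mem_sup_left hmem)
      (Submodule.mem_sup_right (Submodule.smul_mem _ _ (Submodule.mem_span_singleton_self _)))

/-- The magnitude of the derivative of `g` at the first component of `z` in the direction of the
second one, cut off outside `M`. It is a function of both components of a pair of independent
Gaussian vectors, whose value at the rotated pair is the speed of `g` along the rotation. -/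
def enormFDerivOn (g : V → ℝ) (M : Set V) (z : V × V) : ENNReal :=
  M.indicator (fun x => ‖fderiv ℝ g x z.2‖ₑ) z.1

lemma ofReal_sub_le_lintegral_enormFDerivOn_rotation {g : V → ℝ} {U : Set V} (hU : IsOpen U)
    (hg : DifferentiableOn ℝ g U) {k l : ℝ} {a b : ℝ} {z : V × V}
    (hz : ∀ θ ∈ uIcc a b, (rotation θ z).1 ∈ U) (ha : g (rotation a z).1 ≤ k)
    (hb : l ≤ g (rotation b z).1) :
    ENNReal.ofReal (l - k) ≤ ∫⁻ θ in uIcc a b,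
      enormFDerivOn g (U ∩ g ⁻¹' Ioo k l) (rotation θ z) := by
  set p : ℝ → V := fun θ => (rotation θ z).1
  have hderiv (θ : ℝ) (hθ : θ ∈ uIcc a b) :
      HasDerivAt (g ∘ p) (fderiv ℝ g (p θ) (rotation θ z).2) θ :=
    (hg.differentiableAt (hU.mem_nhds (hz θ hθ))).hasFDerivAt.comp_hasDerivAt θ
      (hasDerivAt_rotation_fst z θ)
  have hmeas : MeasurableSet (uIcc a b ∩ (g ∘ p) ⁻¹' Ioo k l) :=
    measurableSet_inter_preimage_of_continuousOn
      (fun θ hθ => (hderiv θ hθ).continuousAt.continuousWithinAt) measurableSet_uIcc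
      measurableSet_Ioo
  calc ENNReal.ofReal (l - k)
      ≤ ∫⁻ θ in uIcc a b ∩ (g ∘ p) ⁻¹' Ioo k l,
          ‖fderiv ℝ g (p θ) (rotation θ z).2‖ₑ :=
        ofReal_sub_le_lintegral_enorm_deriv hderiv ha hb
    _ = ∫⁻ θ in uIcc a b ∩ (g ∘ p) ⁻¹' Ioo k l,
          enormFDerivOn g (U ∩ g ⁻¹' Ioo k l) (rotation θ z) :=
        setLIntegral_congr_fun hmeas fun θ hθ => by
          rw [enormFDerivOn, indicator_of_mem (show p θ ∈ U ∩ g ⁻¹' Ioo k l from ⟨hz θ hθ.1, hθ.2⟩)]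
    _ ≤ _ := lintegral_mono_set inter_subset_left

end Rotation

section Gaussian

variable {V : Type*} [NormedAddCommGroup V] [InnerProductSpace ℝ V] [FiniteDimensional ℝ V]
  [MeasurableSpace V] [BorelSpace V]

lemma stdGaussian_eq_withDensity : stdGaussian V = volume.withDensity fun x =>
    ENNReal.ofReal ((2 * Real.pi) ^ (-(finrank ℝ V / 2 : ℝ)) * Real.exp (-‖x‖ ^ 2 / 2)) := by
  set ρ : V → ℝ := fun x => (2 * Real.pi) ^ (-(finrank ℝ V / 2 : ℝ)) * Real.exp (-‖x‖ ^ 2 / 2)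
  have hρ_nonneg (x : V) : 0 ≤ ρ x := by positivity
  have hρ_int : Integrable ρ := by
    refine .const_mul (.of_integral_ne_zero ?_) _
    have h := GaussianFourier.integral_rexp_neg_mul_sq_norm (V := V) (b := 1 / 2) (by norm_num)
    have hexp (x : V) : -‖x‖ ^ 2 / 2 = -(1 / 2) * ‖x‖ ^ 2 := by ring
    simp only [hexp, h]
    positivity
  have : IsFiniteMeasure (volume.withDensity fun x => ENNReal.ofReal (ρ x)) :=
    isFiniteMeasure_withDensity_ofReal hρ_int.2
  refine Measure.ext_of_charFun (funext fun t => ?_)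
  rw [charFun_stdGaussian, charFun_apply, integral_withDensity_eq_integral_toReal_smul
    (by fun_prop) (ae_of_all _ fun _ => ENNReal.ofReal_lt_top)]
  have hint (x : V) : (ENNReal.ofReal (ρ x)).toReal • Complex.exp (inner ℝ x t * Complex.I)
      = ((2 * Real.pi) ^ (-(finrank ℝ V / 2 : ℝ)) : ℝ)
        * Complex.exp (-(1 / 2) * ‖x‖ ^ 2 + Complex.I * inner ℝ t x) := by
    rw [ENNReal.toReal_ofReal (hρ_nonneg x), Complex.real_smul, Complex.ofReal_mul,
      Complex.ofReal_exp, mul_assoc, ← Complex.exp_add, real_inner_comm]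
    push_cast
    ring_nf
  rw [integral_congr_ae (ae_of_all _ hint), integral_const_mul,
    GaussianFourier.integral_cexp_neg_mul_sq_norm_add (by norm_num),
    Complex.ofReal_cpow (by positivity), ← mul_assoc]
  have hbase : (Real.pi : ℂ) / (1 / 2) = ((2 * Real.pi : ℝ) : ℂ) := by push_cast; ring
  have hne : ((2 * Real.pi : ℝ) : ℂ) ≠ 0 := by
    exact_mod_cast (by positivity : (2 * Real.pi : ℝ) ≠ 0)
  rw [hbase, ← Complex.cpow_add _ _ hne]
  push_cast
  rw [neg_add_cancel, Complex.cpow_zero, one_mul, Complex.I_sq]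
  ring_nf

lemma stdGaussian_absolutelyContinuous : stdGaussian V ≪ volume :=
  stdGaussian_eq_withDensity (V := V) ▸ withDensity_absolutelyContinuous _ _

lemma stdGaussian_submodule {W : Submodule ℝ V} (hW : W ≠ ⊤) : stdGaussian V W = 0 :=
  stdGaussian_absolutelyContinuous (Measure.addHaar_submodule volume W hW)

lemma lintegral_enorm_dual_stdGaussian_le (L : StrongDual ℝ V) :
    ∫⁻ x, ‖L x‖ₑ ∂stdGaussian V ≤ ‖L‖ₑ := by
  have hL : MemLp L 2 (stdGaussian V) := IsGaussian.memLp_dual _ L 2 (by simp)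
  calc ∫⁻ x, ‖L x‖ₑ ∂stdGaussian V = eLpNorm L 1 (stdGaussian V) :=
        eLpNorm_one_eq_lintegral_enorm.symm
    _ ≤ eLpNorm L 2 (stdGaussian V) :=
        eLpNorm_le_eLpNorm_of_exponent_le one_le_two hL.1
    _ = ‖L‖ₑ := by
        rw [hL.eLpNorm_eq_integral_rpow_norm two_ne_zero ENNReal.ofNat_ne_top]
        have hsq : ∫ x, L x ^ 2 ∂stdGaussian V = ‖L‖ ^ 2 := by
          rw [← variance_of_integral_eq_zero hL.1.aemeasurable (integral_strongDual_stdGaussian L),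
            variance_dual_stdGaussian]
        simp [hsq, ← Real.sqrt_eq_rpow, ← one_div, Real.sqrt_sq]

lemma lintegral_lintegral_rotation_stdGaussian {F : V × V → ENNReal} (hF : Measurable F)
    (s : Set ℝ) :
    ∫⁻ z, (∫⁻ θ in s, F (rotation θ z)) ∂(stdGaussian V).prod (stdGaussian V)
      = volume s * ∫⁻ z, F z ∂(stdGaussian V).prod (stdGaussian V) := by
  have hrotation (θ : ℝ) :
      ∫⁻ z, F (rotation θ z) ∂(stdGaussian V).prod (stdGaussian V)
        = ∫⁻ z, F z ∂(stdGaussian V).prod (stdGaussian V) := by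
    rw [← lintegral_map hF (ContinuousLinearMap.measurable _),
      IsGaussian.map_rotation_eq_self integral_id_stdGaussian]
  rw [lintegral_lintegral_swap (f := fun z θ => F (rotation θ z))
    (hF.comp continuous_uncurry_rotation.measurable).aemeasurable]
  simp only [hrotation, setLIntegral_const, mul_comm]

lemma ae_prod_stdGaussian_rotation_fst_notMem {W : Submodule ℝ V} (hW : 2 ≤ finrank ℝ (V ⧸ W))
    {K : Set ℝ} (hK : IsCompact K) :
    ∀ᵐ z ∂(stdGaussian V).prod (stdGaussian V),
      ∀ θ ∈ K, (rotation θ z).1 ∉ W := by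
  have hopen : IsOpen {z : V × V | ∀ θ ∈ K, (rotation θ z).1 ∉ W} :=
    isOpen_iff_eventually.2 fun z hz => hK.eventually_forall_of_forall_eventually fun θ hθ =>
      (W.closed_of_finiteDimensional.isOpen_compl.preimage
        continuous_uncurry_rotation.fst).mem_nhds (hz θ hθ)
  have hsup := sup_span_singleton_ne_top hW
  have hW' : W ≠ ⊤ := fun htop => hsup 0 (by rw [htop, top_sup_eq])
  rw [Measure.ae_prod_iff_ae_ae hopen.measurableSet]
  have hx : ∀ᵐ x ∂stdGaussian V, x ∉ W :=
    measure_eq_zero_iff_ae_notMem.1 (stdGaussian_submodule hW')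
  refine hx.mono fun x hx => ?_
  have hy : ∀ᵐ y ∂stdGaussian V, y ∉ W ⊔ Submodule.span ℝ {x} :=
    measure_eq_zero_iff_ae_notMem.1 (stdGaussian_submodule (hsup x))
  exact hy.mono fun y hy θ _ => rotation_fst_notMem (z := (x, y)) hx hy θ

lemma lintegral_stdGaussian {f : V → ENNReal} (hf : Measurable f) :
    ∫⁻ x, f x ∂stdGaussian V = ∫⁻ x, ENNReal.ofReal
      ((2 * Real.pi) ^ (-(finrank ℝ V / 2 : ℝ)) * Real.exp (-‖x‖ ^ 2 / 2)) * f x := by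
  rw [stdGaussian_eq_withDensity, lintegral_withDensity_eq_lintegral_mul _ (by fun_prop) hf]
  rfl

lemma exists_integral_norm_rpow_stdGaussian_eq [Nontrivial V] : ∃ c : ℝ, ∀ s : ℝ,
    -(finrank ℝ V : ℝ) < s → ∫ x, ‖x‖ ^ s ∂stdGaussian V
      = c * (2 ^ (s / 2) * Real.Gamma ((finrank ℝ V + s) / 2)) := by
  set n := finrank ℝ V with hn
  have hn_pos : 1 ≤ n := finrank_pos
  refine ⟨(2 * Real.pi) ^ (-(n / 2 : ℝ)) * (n * volume.real (ball (0 : V) 1)) *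
    (2 ^ (n / 2 : ℝ) / 2), fun s hs => ?_⟩
  rw [stdGaussian_eq_withDensity, integral_withDensity_eq_integral_toReal_smul (by fun_prop)
    (ae_of_all _ fun _ => ENNReal.ofReal_lt_top)]
  have hdensity (x : V) : (ENNReal.ofReal ((2 * Real.pi) ^ (-(n / 2 : ℝ)) *
      Real.exp (-‖x‖ ^ 2 / 2))).toReal • ‖x‖ ^ s
        = (2 * Real.pi) ^ (-(n / 2 : ℝ)) * (Real.exp (-‖x‖ ^ 2 / 2) * ‖x‖ ^ s) := by
    rw [ENNReal.toReal_ofReal (by positivity), smul_eq_mul, mul_assoc]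
  simp only [← hn, hdensity]
  rw [integral_const_mul,
    integral_fun_norm_addHaar volume fun y => Real.exp (-y ^ 2 / 2) * y ^ s, ← hn]
  simp only [smul_eq_mul, nsmul_eq_mul]
  rw [integral_Ioi_pow_mul_exp_neg_sq_mul_rpow hn_pos hs, add_div, Real.rpow_add two_pos]
  ring

lemma integral_norm_rpow_stdGaussian [Nontrivial V] {s : ℝ} (hs : -(finrank ℝ V : ℝ) < s) :
    ∫ x, ‖x‖ ^ s ∂stdGaussian V
      = 2 ^ (s / 2) * Real.Gamma ((finrank ℝ V + s) / 2) / Real.Gamma (finrank ℝ V / 2) := by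
  obtain ⟨c, hc⟩ := exists_integral_norm_rpow_stdGaussian_eq (V := V)
  have hn : (0 : ℝ) < finrank ℝ V := by exact_mod_cast finrank_pos
  have hmass := hc 0 (by linarith)
  simp only [Real.rpow_zero, integral_const, probReal_univ, smul_eq_mul, mul_one, zero_div,
    add_zero, one_mul] at hmass
  rw [hc s hs, eq_div_iff (Real.Gamma_pos_of_pos (by positivity)).ne', mul_right_comm, ← hmass,
    one_mul]

lemma integral_norm_rpow_neg_two_stdGaussian (hV : 2 < finrank ℝ V) :
    ∫ x, ‖x‖ ^ (-2 : ℝ) ∂stdGaussian V = (finrank ℝ V - 2 : ℝ)⁻¹ := by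
  have : Nontrivial V := nontrivial_of_finrank_pos (two_pos.trans hV)
  have hV' : (2 : ℝ) < finrank ℝ V := by exact_mod_cast hV
  have hhalf : (finrank ℝ V : ℝ) / 2 = (finrank ℝ V + -2) / 2 + 1 := by ring
  have hpos : (0 : ℝ) < (finrank ℝ V + -2) / 2 := by linarith
  have hGamma := (Real.Gamma_pos_of_pos hpos).ne'
  have hsub : (finrank ℝ V - 2 : ℝ) ≠ 0 := by linarith
  rw [integral_norm_rpow_stdGaussian (by linarith), hhalf, Real.Gamma_add_one hpos.ne', neg_div,
    div_self two_ne_zero, Real.rpow_neg_one, ← sub_eq_add_neg]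
  rw [← sub_eq_add_neg] at hGamma
  field_simp

lemma lintegral_ofReal_norm_inv_stdGaussian_le_one (hV : 2 < finrank ℝ V) :
    ∫⁻ x, ENNReal.ofReal ‖x‖⁻¹ ∂stdGaussian V ≤ 1 := by
  have hV' : (3 : ℝ) ≤ finrank ℝ V := by exact_mod_cast hV
  have hint : Integrable (fun x => ‖x‖ ^ (-2 : ℝ)) (stdGaussian V) := by
    refine .of_integral_ne_zero ?_
    rw [integral_norm_rpow_neg_two_stdGaussian hV]
    exact inv_ne_zero (by linarith)
  have hint' : Integrable (fun x : V => (1 + ‖x‖ ^ (-2 : ℝ)) / 2) (stdGaussian V) :=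
    ((integrable_const 1).add hint).div_const 2
  have hamgm (x : V) : ‖x‖⁻¹ ≤ (1 + ‖x‖ ^ (-2 : ℝ)) / 2 := by
    rw [Real.rpow_neg (norm_nonneg x), Real.rpow_two, ← inv_pow]
    linarith [sq_nonneg (‖x‖⁻¹ - 1)]
  calc ∫⁻ x, ENNReal.ofReal ‖x‖⁻¹ ∂stdGaussian V
      ≤ ∫⁻ x, ENNReal.ofReal ((1 + ‖x‖ ^ (-2 : ℝ)) / 2) ∂stdGaussian V :=
        lintegral_mono fun x => ENNReal.ofReal_le_ofReal (hamgm x)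
    _ = ENNReal.ofReal ((1 + (finrank ℝ V - 2 : ℝ)⁻¹) / 2) := by
        rw [← ofReal_integral_eq_lintegral_ofReal hint' (ae_of_all _ fun x => by positivity),
          integral_div, integral_add (integrable_const 1) hint,
          integral_norm_rpow_neg_two_stdGaussian hV, integral_const, probReal_univ, one_smul]
    _ ≤ 1 := by
        rw [ENNReal.ofReal_le_one]
        linarith [inv_le_one_of_one_le₀ (show (1 : ℝ) ≤ finrank ℝ V - 2 by linarith)]

variable {g : V → ℝ} {M : Set V}

lemma measurable_enormFDerivOn (hM : MeasurableSet M) : Measurable (enormFDerivOn g M) :=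
  Measurable.indicator (f := fun z : V × V => ‖fderiv ℝ g z.1 z.2‖ₑ)
    ((ContinuousLinearMap.measurable_apply₂).comp
      (((measurable_fderiv ℝ g).comp measurable_fst).prodMk measurable_snd)).enorm
    (measurable_fst hM)

lemma lintegral_enormFDerivOn_le (hM : MeasurableSet M) :
    ∫⁻ z, enormFDerivOn g M z ∂(stdGaussian V).prod (stdGaussian V)
      ≤ ∫⁻ x in M, ‖fderiv ℝ g x‖ₑ ∂stdGaussian V := by
  rw [lintegral_prod _ (measurable_enormFDerivOn hM).aemeasurable, ← lintegral_indicator hM]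
  refine lintegral_mono fun x => ?_
  by_cases hx : x ∈ M
  · simpa only [enormFDerivOn, indicator_of_mem hx] using
      lintegral_enorm_dual_stdGaussian_le (fderiv ℝ g x)
  · simp only [enormFDerivOn, indicator_of_notMem hx, lintegral_zero, le_refl]

lemma lintegral_lintegral_enormFDerivOn_rotation_le (hM : MeasurableSet M) :
    ∫⁻ z, (∫⁻ θ in uIcc 0 (Real.pi / 2), enormFDerivOn g M (rotation θ z))
        ∂(stdGaussian V).prod (stdGaussian V)
      ≤ ENNReal.ofReal (Real.pi / 2) * ∫⁻ x in M, ‖fderiv ℝ g x‖ₑ ∂stdGaussian V := by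
  rw [lintegral_lintegral_rotation_stdGaussian (measurable_enormFDerivOn hM),
    Real.volume_interval, sub_zero, abs_of_pos Real.pi_div_two_pos]
  gcongr
  exact lintegral_enormFDerivOn_le hM

lemma ae_ofReal_sub_le_lintegral_enormFDerivOn_rotation {W : Submodule ℝ V}
    (hW : 2 ≤ finrank ℝ (V ⧸ W)) (hg : DifferentiableOn ℝ g (W : Set V)ᶜ) {k l : ℝ} :
    ∀ᵐ z ∂(stdGaussian V).prod (stdGaussian V),
      g z.1 ≤ k ∧ l ≤ g z.2 ∨ l ≤ g z.1 ∧ g z.2 ≤ k →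
        ENNReal.ofReal (l - k) ≤ ∫⁻ θ in uIcc 0 (Real.pi / 2),
          enormFDerivOn g ((W : Set V)ᶜ ∩ g ⁻¹' Ioo k l) (rotation θ z) := by
  have hU : IsOpen (W : Set V)ᶜ := W.closed_of_finiteDimensional.isOpen_compl
  filter_upwards [ae_prod_stdGaussian_rotation_fst_notMem hW isCompact_uIcc] with z hzU hz
  have hstart : (rotation 0 z).1 = z.1 := by
    simp [ContinuousLinearMap.rotation_apply]
  have hend : (rotation (Real.pi / 2) z).1 = z.2 := by
    simp [ContinuousLinearMap.rotation_apply]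
  rw [← hstart, ← hend] at hz
  rcases hz with ⟨hk, hl⟩ | ⟨hl, hk⟩
  · exact ofReal_sub_le_lintegral_enormFDerivOn_rotation hU hg hzU hk hl
  · rw [uIcc_comm] at hzU ⊢
    exact ofReal_sub_le_lintegral_enormFDerivOn_rotation hU hg hzU hk hl

theorem two_mul_stdGaussian_mul_stdGaussian_le {W : Submodule ℝ V}
    (hW : 2 ≤ finrank ℝ (V ⧸ W)) (hg : DifferentiableOn ℝ g (W : Set V)ᶜ) (k l : ℝ) :
    2 * (ENNReal.ofReal (l - k) *
        (stdGaussian V ((W : Set V)ᶜ ∩ g ⁻¹' Iic k) * stdGaussian V ((W : Set V)ᶜ ∩ g ⁻¹' Ici l)))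
      ≤ ENNReal.ofReal (Real.pi / 2) *
        ∫⁻ x in (W : Set V)ᶜ ∩ g ⁻¹' Ioo k l, ‖fderiv ℝ g x‖ₑ ∂stdGaussian V := by
  rcases le_or_gt l k with hlk | hkl
  · rw [ENNReal.ofReal_of_nonpos (sub_nonpos.2 hlk), zero_mul, mul_zero]
    exact zero_le
  set U : Set V := (W : Set V)ᶜ
  have hU : IsOpen U := W.closed_of_finiteDimensional.isOpen_compl
  have hmeas {s : Set ℝ} (hs : MeasurableSet s) : MeasurableSet (U ∩ g ⁻¹' s) :=
    measurableSet_inter_preimage_of_continuousOn hg.continuousOn hU.measurableSet hs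
  set A := U ∩ g ⁻¹' Iic k
  set C := U ∩ g ⁻¹' Ici l
  set M := U ∩ g ⁻¹' Ioo k l
  set γ := stdGaussian V
  have hA : MeasurableSet A := hmeas measurableSet_Iic
  have hC : MeasurableSet C := hmeas measurableSet_Ici
  have hM : MeasurableSet M := hmeas measurableSet_Ioo
  have hdisj : Disjoint (A ×ˢ C) (C ×ˢ A) := Set.disjoint_left.2 fun z hz hz' =>
    absurd (hz'.1.2.trans hz.1.2) (not_le.2 hkl)
  have hcross := ae_ofReal_sub_le_lintegral_enormFDerivOn_rotation hW hg (k := k) (l := l)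
  calc 2 * (ENNReal.ofReal (l - k) * (γ A * γ C))
      = ENNReal.ofReal (l - k) * γ.prod γ (A ×ˢ C ∪ C ×ˢ A) := by
        rw [measure_union hdisj (hC.prod hA), Measure.prod_prod, Measure.prod_prod]
        ring
    _ = ∫⁻ _ in A ×ˢ C ∪ C ×ˢ A, ENNReal.ofReal (l - k) ∂γ.prod γ :=
        (setLIntegral_const _ _).symm
    _ ≤ ∫⁻ z in A ×ˢ C ∪ C ×ˢ A, (∫⁻ θ in uIcc 0 (Real.pi / 2),
          enormFDerivOn g M (rotation θ z)) ∂γ.prod γ :=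
        setLIntegral_mono_ae' ((hA.prod hC).union (hC.prod hA))
          (hcross.mono fun z hz hmem => hz <| hmem.imp (fun h => ⟨h.1.2, h.2.2⟩)
            fun h => ⟨h.1.2, h.2.2⟩)
    _ ≤ ∫⁻ z, (∫⁻ θ in uIcc 0 (Real.pi / 2),
          enormFDerivOn g M (rotation θ z)) ∂γ.prod γ :=
        setLIntegral_le_lintegral _ _
    _ ≤ ENNReal.ofReal (Real.pi / 2) * ∫⁻ x in M, ‖fderiv ℝ g x‖ₑ ∂γ :=
        lintegral_lintegral_enormFDerivOn_rotation_le hM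

end Gaussian

section Normalize

variable {V : Type*} [NormedAddCommGroup V] [InnerProductSpace ℝ V] {x : V}

lemma differentiableAt_normalize (hx : x ≠ 0) : DifferentiableAt ℝ NormedSpace.normalize x :=
  ((differentiableAt_id.norm ℝ hx).inv (norm_ne_zero_iff.2 hx)).smul differentiableAt_id

/- The two terms of `v = D(‖·‖ • normalize) v = ‖x‖ • D normalize v + (D‖·‖ v) • normalize x` are
orthogonal because `‖normalize‖² = 1` near `x`. -/
lemma norm_fderiv_normalize_le (hx : x ≠ 0) : ‖fderiv ℝ NormedSpace.normalize x‖ ≤ ‖x‖⁻¹ := by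
  refine ContinuousLinearMap.opNorm_le_bound _ (by positivity) fun v => ?_
  set w := fderiv ℝ NormedSpace.normalize x v
  have hnormalize : HasFDerivAt NormedSpace.normalize (fderiv ℝ NormedSpace.normalize x) x :=
    (differentiableAt_normalize hx).hasFDerivAt
  have horth : inner ℝ (NormedSpace.normalize x) w = 0 := by
    have hconst : (fun y : V => ‖NormedSpace.normalize y‖ ^ 2) =ᶠ[nhds x] fun _ => 1 := by
      filter_upwards [isOpen_ne.mem_nhds hx] with y hy
      rw [NormedSpace.norm_normalize_eq_one_iff.2 hy, one_pow]
    have hzero := hnormalize.norm_sq.unique ((hasFDerivAt_const 1 x).congr_of_eventuallyEq hconst)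
    simpa [w] using congr($hzero v)
  have hdecomp : ‖x‖ • w + fderiv ℝ norm x v • NormedSpace.normalize x = v := by
    have hprod := (differentiableAt_id.norm ℝ hx).hasFDerivAt.smul hnormalize
    have hself : (fun y : V => ‖y‖ • NormedSpace.normalize y) = id :=
      funext NormedSpace.norm_smul_normalize
    have := hprod.unique (hself ▸ hasFDerivAt_id x)
    simpa [w] using congr($this v)
  have hsq : (‖x‖ * ‖w‖) ^ 2 ≤ ‖v‖ ^ 2 := by
    have hpyth := norm_add_sq_eq_norm_sq_add_norm_sq_of_inner_eq_zero (‖x‖ • w)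
      (fderiv ℝ norm x v • NormedSpace.normalize x)
      (by rw [inner_smul_left, inner_smul_right, real_inner_comm, horth, mul_zero, mul_zero])
    rw [hdecomp, norm_smul, norm_norm] at hpyth
    nlinarith [sq_nonneg ‖fderiv ℝ norm x v • NormedSpace.normalize x‖]
  rw [inv_mul_eq_div, le_div_iff₀' (norm_pos_iff.2 hx)]
  exact (sq_le_sq₀ (by positivity) (by positivity)).1 hsq

end Normalize

section BallProjection

variable {E : Type*} [NormedAddCommGroup E] [InnerProductSpace ℝ E]

/-- The projection of Archimedes: the unit sphere of `E × ℂ` is projected orthogonally to the unit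
ball of `E`, then scaled by `R`. As `ℂ` is two-dimensional, the uniform measure on the sphere is
sent to the uniform measure on the ball. The map is extended to `E × ℂ` by `0`-homogeneity. -/
def ballProj (R : ℝ) (p : WithLp 2 (E × ℂ)) : E :=
  R • (NormedSpace.normalize p).fst

lemma ballProj_eq_smul (R : ℝ) (p : WithLp 2 (E × ℂ)) : ballProj R p = (R / ‖p‖) • p.fst := by
  simp [ballProj, NormedSpace.normalize, smul_smul, div_eq_mul_inv]

lemma ballProj_mem_ball {R : ℝ} (hR : 0 < R) {p : WithLp 2 (E × ℂ)} (hp : p.snd ≠ 0) :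
    ballProj R p ∈ ball 0 R := by
  have hlt : ‖p.fst‖ < ‖p‖ := by
    rw [← sq_lt_sq₀ (norm_nonneg _) (norm_nonneg _), WithLp.prod_norm_sq_eq_of_L2]
    exact lt_add_of_pos_right _ (pow_pos (norm_pos_iff.2 hp) 2)
  have hpos : 0 < ‖p‖ := (norm_nonneg _).trans_lt hlt
  rw [mem_ball_zero_iff, ballProj_eq_smul, norm_smul, Real.norm_of_nonneg (by positivity),
    div_mul_eq_mul_div, div_lt_iff₀ hpos]
  gcongr

lemma measurable_ballProj [MeasurableSpace E] [BorelSpace E] [FiniteDimensional ℝ E] (R : ℝ) :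
    Measurable (ballProj R : WithLp 2 (E × ℂ) → E) := by
  have hfst : Measurable fun p : WithLp 2 (E × ℂ) => p.fst :=
    (WithLp.fstL 2 ℝ E ℂ).continuous.measurable
  simp only [funext (ballProj_eq_smul R)]
  fun_prop

lemma differentiableAt_ballProj (R : ℝ) {p : WithLp 2 (E × ℂ)} (hp : p ≠ 0) :
    DifferentiableAt ℝ (ballProj R) p :=
  ((WithLp.fstL 2 ℝ E ℂ).differentiableAt.comp p (differentiableAt_normalize hp)).const_smul R

lemma norm_fderiv_ballProj_le {R : ℝ} (hR : 0 ≤ R) {p : WithLp 2 (E × ℂ)} (hp : p ≠ 0) :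
    ‖fderiv ℝ (ballProj R) p‖ ≤ R / ‖p‖ := by
  have hcomp : fderiv ℝ (ballProj R) p
      = R • (WithLp.fstL 2 ℝ E ℂ).comp (fderiv ℝ NormedSpace.normalize p) :=
    (((WithLp.fstL 2 ℝ E ℂ).hasFDerivAt.comp p
      (differentiableAt_normalize hp).hasFDerivAt).const_smul R).fderiv
  refine ContinuousLinearMap.opNorm_le_bound _ (by positivity) fun v => ?_
  calc ‖fderiv ℝ (ballProj R) p v‖
      = R * ‖(fderiv ℝ NormedSpace.normalize p v).fst‖ := by
        rw [hcomp, smul_apply, norm_smul, Real.norm_of_nonneg hR]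
        rfl
    _ ≤ R * (‖fderiv ℝ NormedSpace.normalize p‖ * ‖v‖) := by
        gcongr
        exact (WithLp.norm_fst_le _ _).trans (ContinuousLinearMap.le_opNorm _ _)
    _ ≤ R * (‖p‖⁻¹ * ‖v‖) := by
        gcongr
        exact norm_fderiv_normalize_le hp
    _ = R / ‖p‖ * ‖v‖ := by ring

lemma smul_mem_ball_iff_norm_sq_lt {R τ : ℝ} (hR : 0 < R) (hτ : 0 < τ) (x : E) :
    (R / √τ) • x ∈ ball 0 R ↔ ‖x‖ ^ 2 < τ := by
  have hsqrt : 0 < √τ := Real.sqrt_pos.2 hτ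
  rw [mem_ball_zero_iff, norm_smul, Real.norm_of_nonneg (by positivity), div_mul_eq_mul_div,
    div_lt_iff₀ hsqrt, mul_lt_mul_iff_right₀ hR, Real.lt_sqrt (norm_nonneg x)]

end BallProjection

section Archimedes

variable {E : Type*} [NormedAddCommGroup E] [InnerProductSpace ℝ E] [MeasurableSpace E]
  [BorelSpace E]

lemma lintegral_complex_mul_comp_ballProj {R : ℝ} (hR : 0 < R) {φ : ℝ → ENNReal}
    (hφ : Measurable φ) {h : E → ENNReal} (hh : Measurable h) (x : E) :
    ∫⁻ w : ℂ, φ (‖WithLp.toLp 2 (x, w)‖ ^ 2) * h (ballProj R (WithLp.toLp 2 (x, w)))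
      = ENNReal.ofReal Real.pi *
        ∫⁻ τ in Ioi 0, φ τ * (ball 0 R).indicator h ((R / √τ) • x) := by
  set ψ : ℝ → ENNReal := fun τ => φ τ * h ((R / √τ) • x)
  have hψ : Measurable ψ := by fun_prop
  calc ∫⁻ w : ℂ, φ (‖WithLp.toLp 2 (x, w)‖ ^ 2) * h (ballProj R (WithLp.toLp 2 (x, w)))
      = ∫⁻ w : ℂ, ψ (‖x‖ ^ 2 + ‖w‖ ^ 2) := by
        refine lintegral_congr fun w => ?_
        have hsq : ‖WithLp.toLp 2 (x, w)‖ ^ 2 = ‖x‖ ^ 2 + ‖w‖ ^ 2 :=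
          WithLp.prod_norm_sq_eq_of_L2 _
        rw [ballProj_eq_smul, ← Real.sqrt_sq (norm_nonneg (WithLp.toLp 2 (x, w))), hsq,
          Real.sq_sqrt (by positivity)]
        rfl
    _ = ENNReal.ofReal Real.pi * ∫⁻ τ in Ioi (‖x‖ ^ 2), ψ τ := by
        rw [lintegral_comp_norm_sq_complex (ψ := fun s => ψ (‖x‖ ^ 2 + s)) (by fun_prop),
          lintegral_Ioi_comp_add_left]
    _ = ENNReal.ofReal Real.pi *
          ∫⁻ τ in Ioi 0, φ τ * (ball 0 R).indicator h ((R / √τ) • x) := by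
        congr 1
        rw [← lintegral_indicator measurableSet_Ioi, ← lintegral_indicator measurableSet_Ioi]
        refine lintegral_congr fun τ => ?_
        rcases le_or_gt τ 0 with hτ | hτ
        · rw [indicator_of_notMem (notMem_Ioi.2 (hτ.trans (sq_nonneg _))),
            indicator_of_notMem (notMem_Ioi.2 hτ)]
        · rw [indicator_of_mem (mem_Ioi.2 hτ)]
          by_cases hx : ‖x‖ ^ 2 < τ
          · rw [indicator_of_mem (mem_Ioi.2 hx),
              indicator_of_mem ((smul_mem_ball_iff_norm_sq_lt hR hτ x).2 hx)]
          · rw [indicator_of_notMem (notMem_Ioi.2 (not_lt.1 hx)),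
              indicator_of_notMem (mt (smul_mem_ball_iff_norm_sq_lt hR hτ x).1 hx), mul_zero]

variable [FiniteDimensional ℝ E]

lemma lintegral_norm_sq_mul_comp_ballProj {R : ℝ} (hR : 0 < R) {φ : ℝ → ENNReal}
    (hφ : Measurable φ) {h : E → ENNReal} (hh : Measurable h) :
    ∫⁻ p : WithLp 2 (E × ℂ), φ (‖p‖ ^ 2) * h (ballProj R p)
      = (ENNReal.ofReal Real.pi *
          ∫⁻ τ in Ioi 0, φ τ * ENNReal.ofReal ((√τ / R) ^ finrank ℝ E)) *
        ∫⁻ x in ball 0 R, h x := by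
  have hhR : Measurable ((ball (0 : E) R).indicator h) := hh.indicator measurableSet_ball
  have hF : Measurable fun p : WithLp 2 (E × ℂ) => φ (‖p‖ ^ 2) * h (ballProj R p) :=
    (hφ.comp (measurable_norm.pow_const 2)).mul (hh.comp (measurable_ballProj R))
  calc ∫⁻ p : WithLp 2 (E × ℂ), φ (‖p‖ ^ 2) * h (ballProj R p)
      = ∫⁻ x : E, ∫⁻ w : ℂ,
          φ (‖WithLp.toLp 2 (x, w)‖ ^ 2) * h (ballProj R (WithLp.toLp 2 (x, w))) := by
        rw [← (WithLp.volume_preserving_toLp E ℂ).lintegral_comp hF, Measure.volume_eq_prod,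
          lintegral_prod (fun q => φ (‖WithLp.toLp 2 q‖ ^ 2) * h (ballProj R (WithLp.toLp 2 q)))
            (hF.comp (WithLp.volume_preserving_toLp E ℂ).measurable).aemeasurable]
    _ = ENNReal.ofReal Real.pi *
          ∫⁻ x, ∫⁻ τ in Ioi 0, φ τ * (ball 0 R).indicator h ((R / √τ) • x) := by
        simp only [lintegral_complex_mul_comp_ballProj hR hφ hh]
        exact lintegral_const_mul' _ _ ENNReal.ofReal_ne_top
    _ = ENNReal.ofReal Real.pi *
          ∫⁻ τ in Ioi 0, ∫⁻ x, φ τ * (ball 0 R).indicator h ((R / √τ) • x) := by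
        rw [lintegral_lintegral_swap]
        exact Measurable.aemeasurable (by unfold Function.uncurry; fun_prop)
    _ = ENNReal.ofReal Real.pi * ∫⁻ τ in Ioi 0,
          φ τ * ENNReal.ofReal ((√τ / R) ^ finrank ℝ E) * ∫⁻ x in ball 0 R, h x := by
        congr 1
        refine setLIntegral_congr_fun measurableSet_Ioi fun τ (hτ : 0 < τ) => ?_
        rw [lintegral_const_mul _ (by fun_prop), lintegral_comp_smul _ _ (by positivity),
          lintegral_indicator measurableSet_ball, ← inv_pow, inv_div, abs_of_pos (by positivity),
          mul_assoc]
    _ = (ENNReal.ofReal Real.pi *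
          ∫⁻ τ in Ioi 0, φ τ * ENNReal.ofReal ((√τ / R) ^ finrank ℝ E)) *
        ∫⁻ x in ball 0 R, h x := by
        rw [lintegral_mul_const _ (by fun_prop), mul_assoc]

lemma lintegral_norm_sq_mul_comp_ballProj_stdGaussian {R : ℝ} (hR : 0 < R) {ψ : ℝ → ENNReal}
    (hψ : Measurable ψ) {h : E → ENNReal} (hh : Measurable h) :
    ∫⁻ p, ψ (‖p‖ ^ 2) * h (ballProj R p) ∂stdGaussian (WithLp 2 (E × ℂ))
      = (∫⁻ p, ψ (‖p‖ ^ 2) ∂stdGaussian (WithLp 2 (E × ℂ))) * ⨍⁻ x in ball 0 R, h x ∂volume := by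
  set φ : ℝ → ENNReal := fun τ => ENNReal.ofReal
    ((2 * Real.pi) ^ (-(finrank ℝ (WithLp 2 (E × ℂ)) / 2 : ℝ)) * Real.exp (-τ / 2)) * ψ τ
  set C := ENNReal.ofReal Real.pi *
    ∫⁻ τ in Ioi 0, φ τ * ENNReal.ofReal ((√τ / R) ^ finrank ℝ E)
  have hproduct {h : E → ENNReal} (hh : Measurable h) :
      ∫⁻ p, ψ (‖p‖ ^ 2) * h (ballProj R p) ∂stdGaussian (WithLp 2 (E × ℂ))
        = C * ∫⁻ x in ball 0 R, h x := by
    have hmeas : Measurable fun p : WithLp 2 (E × ℂ) => ψ (‖p‖ ^ 2) * h (ballProj R p) :=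
      (hψ.comp (measurable_norm.pow_const 2)).mul (hh.comp (measurable_ballProj R))
    rw [lintegral_stdGaussian hmeas]
    simp only [← mul_assoc]
    exact lintegral_norm_sq_mul_comp_ballProj hR (φ := φ) (by fun_prop) hh
  have hmass := hproduct (h := fun _ => 1) measurable_const
  simp only [mul_one, setLIntegral_one] at hmass
  have hball : volume (ball (0 : E) R) ≠ 0 := (measure_ball_pos _ _ hR).ne'
  rw [hproduct hh, hmass, setLAverage_eq, mul_assoc C,
    ENNReal.mul_div_cancel hball measure_ball_lt_top.ne]

lemma stdGaussian_preimage_ballProj {R : ℝ} (hR : 0 < R) {s : Set E} (hs : MeasurableSet s) :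
    stdGaussian (WithLp 2 (E × ℂ)) (ballProj R ⁻¹' s)
      = volume (ball 0 R ∩ s) / volume (ball (0 : E) R) := by
  have h := lintegral_norm_sq_mul_comp_ballProj_stdGaussian hR (ψ := fun _ => 1) measurable_const
    (h := s.indicator 1) (measurable_one.indicator hs)
  simp only [one_mul, lintegral_const, measure_univ, setLAverage_eq] at h
  rw [lintegral_indicator_one hs, Measure.restrict_apply hs, inter_comm] at h
  rw [← h, ← lintegral_indicator_one (measurable_ballProj R hs)]
  rfl

lemma lintegral_norm_inv_mul_comp_ballProj_stdGaussian_le [Nontrivial E] {R : ℝ} (hR : 0 < R)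
    {h : E → ENNReal} (hh : Measurable h) :
    ∫⁻ p, ENNReal.ofReal ‖p‖⁻¹ * h (ballProj R p) ∂stdGaussian (WithLp 2 (E × ℂ))
      ≤ ⨍⁻ x in ball 0 R, h x ∂volume := by
  have hfinrank : 2 < finrank ℝ (WithLp 2 (E × ℂ)) := by
    rw [(WithLp.linearEquiv 2 ℝ (E × ℂ)).finrank_eq, finrank_prod, Complex.finrank_real_complex]
    exact lt_add_of_pos_left 2 finrank_pos
  have hprod := lintegral_norm_sq_mul_comp_ballProj_stdGaussian hR
    (ψ := fun τ => ENNReal.ofReal (√τ)⁻¹) (by fun_prop) hh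
  simp only [Real.sqrt_sq (norm_nonneg _)] at hprod
  rw [hprod]
  exact mul_le_of_le_one_left' (lintegral_ofReal_norm_inv_stdGaussian_le_one hfinrank)

end Archimedes

section Ball

variable {E : Type*} [NormedAddCommGroup E] [InnerProductSpace ℝ E]

variable (E) in
/-- The subspace `E × 0` of `E × ℂ`, which `ballProj R` sends to the sphere of radius `R` (and
to `0`) rather than to the interior of the ball. -/
def fstSubspace : Submodule ℝ (WithLp 2 (E × ℂ)) :=
  LinearMap.ker (WithLp.sndL 2 ℝ E ℂ).toLinearMap

lemma mem_fstSubspace {p : WithLp 2 (E × ℂ)} : p ∈ fstSubspace E ↔ p.snd = 0 :=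
  LinearMap.mem_ker

variable (E) in
lemma finrank_quotient_fstSubspace : finrank ℝ (WithLp 2 (E × ℂ) ⧸ fstSubspace E) = 2 := by
  have hsurj : Function.Surjective (WithLp.sndL 2 ℝ E ℂ).toLinearMap :=
    fun w => ⟨WithLp.toLp 2 (0, w), rfl⟩
  exact (LinearMap.quotKerEquivOfSurjective _ hsurj).finrank_eq.trans Complex.finrank_real_complex

variable {R : ℝ} {u : E → ℝ}

lemma mapsTo_ballProj (hR : 0 < R) :
    MapsTo (ballProj R) (fstSubspace E : Set (WithLp 2 (E × ℂ)))ᶜ (ball 0 R) :=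
  fun _ hp => ballProj_mem_ball hR (mt mem_fstSubspace.2 hp)

lemma compl_fstSubspace_inter_preimage_comp_ballProj (hR : 0 < R) (s : Set ℝ) :
    (fstSubspace E : Set (WithLp 2 (E × ℂ)))ᶜ ∩ (u ∘ ballProj R) ⁻¹' s
      = (fstSubspace E : Set (WithLp 2 (E × ℂ)))ᶜ ∩ ballProj R ⁻¹' (ball 0 R ∩ u ⁻¹' s) := by
  rw [preimage_inter, ← inter_assoc, inter_eq_left.2 (mapsTo_ballProj hR).subset_preimage,
    preimage_comp]

lemma ne_zero_of_notMem_fstSubspace {p : WithLp 2 (E × ℂ)} (hp : p ∉ fstSubspace E) : p ≠ 0 :=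
  fun h => hp (h ▸ zero_mem _)

lemma differentiableOn_comp_ballProj (hR : 0 < R) (hu : DifferentiableOn ℝ u (ball 0 R)) :
    DifferentiableOn ℝ (u ∘ ballProj R) (fstSubspace E : Set (WithLp 2 (E × ℂ)))ᶜ :=
  hu.comp (fun _ hp => (differentiableAt_ballProj R
    (ne_zero_of_notMem_fstSubspace hp)).differentiableWithinAt) (mapsTo_ballProj hR)

lemma enorm_fderiv_comp_ballProj_le (hR : 0 < R) (hu : DifferentiableOn ℝ u (ball 0 R))
    {p : WithLp 2 (E × ℂ)} (hp : p ∉ fstSubspace E) :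
    ‖fderiv ℝ (u ∘ ballProj R) p‖ₑ
      ≤ ENNReal.ofReal R * (ENNReal.ofReal ‖p‖⁻¹ * ‖fderiv ℝ u (ballProj R p)‖ₑ) := by
  have hp0 : p ≠ 0 := ne_zero_of_notMem_fstSubspace hp
  rw [fderiv_comp p (hu.differentiableAt (isOpen_ball.mem_nhds (mapsTo_ballProj hR hp)))
    (differentiableAt_ballProj R hp0), ← ofReal_norm, ← ofReal_norm,
    ← ENNReal.ofReal_mul (by positivity), ← ENNReal.ofReal_mul hR.le]
  refine ENNReal.ofReal_le_ofReal ?_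
  calc ‖(fderiv ℝ u (ballProj R p)).comp (fderiv ℝ (ballProj R) p)‖
      ≤ ‖fderiv ℝ u (ballProj R p)‖ * ‖fderiv ℝ (ballProj R) p‖ :=
        ContinuousLinearMap.opNorm_comp_le _ _
    _ ≤ ‖fderiv ℝ u (ballProj R p)‖ * (R / ‖p‖) := by
        gcongr
        exact norm_fderiv_ballProj_le hR.le hp0
    _ = R * (‖p‖⁻¹ * ‖fderiv ℝ u (ballProj R p)‖) := by ring

variable [FiniteDimensional ℝ E] [MeasurableSpace E] [BorelSpace E]

lemma stdGaussian_inter_preimage_comp_ballProj (hR : 0 < R) (hu : ContinuousOn u (ball 0 R))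
    {s : Set ℝ} (hs : MeasurableSet s) :
    stdGaussian (WithLp 2 (E × ℂ)) ((fstSubspace E : Set (WithLp 2 (E × ℂ)))ᶜ ∩
        (u ∘ ballProj R) ⁻¹' s)
      = volume (ball 0 R ∩ u ⁻¹' s) / volume (ball (0 : E) R) := by
  have hproper : fstSubspace E ≠ ⊤ := by
    intro htop
    have h := finrank_quotient_fstSubspace E
    rw [Submodule.finrank_quotient, htop, finrank_top, Nat.sub_self] at h
    omega
  rw [compl_fstSubspace_inter_preimage_comp_ballProj hR, inter_comm,
    measure_inter_conull (by rw [compl_compl]; exact stdGaussian_submodule hproper),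
    stdGaussian_preimage_ballProj hR
      (measurableSet_inter_preimage_of_continuousOn hu measurableSet_ball hs),
    ← inter_assoc, inter_self]

lemma lintegral_enorm_fderiv_comp_ballProj_le [Nontrivial E] (hR : 0 < R)
    (hu : DifferentiableOn ℝ u (ball 0 R)) {s : Set ℝ} (hs : MeasurableSet s) :
    ∫⁻ p in (fstSubspace E : Set (WithLp 2 (E × ℂ)))ᶜ ∩ (u ∘ ballProj R) ⁻¹' s,
        ‖fderiv ℝ (u ∘ ballProj R) p‖ₑ ∂stdGaussian (WithLp 2 (E × ℂ))
      ≤ ENNReal.ofReal R *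
        ((∫⁻ x in ball 0 R ∩ u ⁻¹' s, ‖fderiv ℝ u x‖ₑ) / volume (ball (0 : E) R)) := by
  set U := (fstSubspace E : Set (WithLp 2 (E × ℂ)))ᶜ
  have hU : MeasurableSet U :=
    (fstSubspace E).closed_of_finiteDimensional.isOpen_compl.measurableSet
  have hM : MeasurableSet (ball 0 R ∩ u ⁻¹' s) :=
    measurableSet_inter_preimage_of_continuousOn hu.continuousOn measurableSet_ball hs
  set h : E → ENNReal := (ball 0 R ∩ u ⁻¹' s).indicator fun x => ‖fderiv ℝ u x‖ₑ
  have hh : Measurable h := (measurable_fderiv ℝ u).enorm.indicator hM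
  calc ∫⁻ p in U ∩ (u ∘ ballProj R) ⁻¹' s,
        ‖fderiv ℝ (u ∘ ballProj R) p‖ₑ ∂stdGaussian (WithLp 2 (E × ℂ))
      ≤ ∫⁻ p in U ∩ (u ∘ ballProj R) ⁻¹' s, ENNReal.ofReal R *
          (ENNReal.ofReal ‖p‖⁻¹ * h (ballProj R p)) ∂stdGaussian (WithLp 2 (E × ℂ)) := by
        rw [compl_fstSubspace_inter_preimage_comp_ballProj hR]
        refine setLIntegral_mono' (hU.inter (measurable_ballProj R hM)) fun p hp => ?_
        simp only [h, indicator_of_mem (show ballProj R p ∈ ball 0 R ∩ u ⁻¹' s from hp.2)]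
        exact enorm_fderiv_comp_ballProj_le hR hu hp.1
    _ ≤ ∫⁻ p, ENNReal.ofReal R *
          (ENNReal.ofReal ‖p‖⁻¹ * h (ballProj R p)) ∂stdGaussian (WithLp 2 (E × ℂ)) :=
        setLIntegral_le_lintegral _ _
    _ ≤ ENNReal.ofReal R * ⨍⁻ x in ball 0 R, h x ∂volume := by
        rw [lintegral_const_mul' _ _ ENNReal.ofReal_ne_top]
        gcongr
        exact lintegral_norm_inv_mul_comp_ballProj_stdGaussian_le hR hh
    _ = _ := by
        rw [setLAverage_eq, lintegral_indicator hM, Measure.restrict_restrict hM,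
          inter_right_comm, inter_self]

theorem ofReal_sub_mul_volume_mul_volume_le [Nontrivial E] (hR : 0 < R)
    (hu : DifferentiableOn ℝ u (ball 0 R)) (k l : ℝ) :
    ENNReal.ofReal (l - k) * volume (ball 0 R ∩ u ⁻¹' Iic k) * volume (ball 0 R ∩ u ⁻¹' Ici l)
      ≤ ENNReal.ofReal R * volume (ball (0 : E) R) *
        ∫⁻ x in ball 0 R ∩ u ⁻¹' Ioo k l, ‖fderiv ℝ u x‖ₑ := by
  set b := volume (ball (0 : E) R)
  have hb : b ≠ 0 := (measure_ball_pos _ _ hR).ne'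
  have hb' : b ≠ ⊤ := measure_ball_lt_top.ne
  set I := ∫⁻ x in ball 0 R ∩ u ⁻¹' Ioo k l, ‖fderiv ℝ u x‖ₑ
  have hpi : ENNReal.ofReal (Real.pi / 2) ≤ 2 := by
    rw [← ENNReal.ofReal_ofNat]
    exact ENNReal.ofReal_le_ofReal (by linarith [Real.pi_le_four])
  have hGauss : 2 * (ENNReal.ofReal (l - k) * (volume (ball 0 R ∩ u ⁻¹' Iic k) / b *
      (volume (ball 0 R ∩ u ⁻¹' Ici l) / b))) ≤ 2 * (ENNReal.ofReal R * (I / b)) := by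
    rw [← stdGaussian_inter_preimage_comp_ballProj hR hu.continuousOn measurableSet_Iic,
      ← stdGaussian_inter_preimage_comp_ballProj hR hu.continuousOn measurableSet_Ici]
    refine (two_mul_stdGaussian_mul_stdGaussian_le (finrank_quotient_fstSubspace E).ge
      (differentiableOn_comp_ballProj hR hu) k l).trans ?_
    gcongr
    exact lintegral_enorm_fderiv_comp_ballProj_le hR hu measurableSet_Ioo
  rw [ENNReal.mul_le_mul_iff_right two_ne_zero ENNReal.ofNat_ne_top] at hGauss
  calc ENNReal.ofReal (l - k) * volume (ball 0 R ∩ u ⁻¹' Iic k) * volume (ball 0 R ∩ u ⁻¹' Ici l)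
      = ENNReal.ofReal (l - k) * (volume (ball 0 R ∩ u ⁻¹' Iic k) / b *
          (volume (ball 0 R ∩ u ⁻¹' Ici l) / b)) * (b * b) := by
        nth_rw 1 [← ENNReal.div_mul_cancel hb hb' (b := volume (ball 0 R ∩ u ⁻¹' Iic k)),
          ← ENNReal.div_mul_cancel hb hb' (b := volume (ball 0 R ∩ u ⁻¹' Ici l))]
        ring
    _ ≤ ENNReal.ofReal R * (I / b) * (b * b) := by gcongr
    _ = ENNReal.ofReal R * b * I := by
        nth_rw 2 [← ENNReal.div_mul_cancel hb hb' (b := I)]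
        ring

end Ball

lemma setLIntegral_enorm_le_rpow_mul_rpow {α F : Type*} [MeasurableSpace α] {μ : Measure α}
    [NormedAddCommGroup F] {f : α → F} {s t : Set α} (hst : s ⊆ t)
    (hf : AEMeasurable (fun x => ‖f x‖ₑ) (μ.restrict s))
    (hint : IntegrableOn (fun x => ‖f x‖ ^ 2) t μ) :
    ∫⁻ x in s, ‖f x‖ₑ ∂μ
      ≤ μ s ^ (1 / 2 : ℝ) * ENNReal.ofReal (∫ x in t, ‖f x‖ ^ 2 ∂μ) ^ (1 / 2 : ℝ) := by
  have hHolder := ENNReal.lintegral_mul_le_Lp_mul_Lq (μ.restrict s) Real.HolderConjugate.two_two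
    (f := fun _ => 1) aemeasurable_const hf
  simp only [Pi.mul_apply, one_mul, ENNReal.one_rpow, lintegral_const,
    Measure.restrict_apply_univ] at hHolder
  refine hHolder.trans ?_
  gcongr
  rw [ofReal_integral_eq_lintegral_ofReal hint (ae_of_all _ fun x => sq_nonneg _)]
  refine (lintegral_mono fun x => ?_).trans (lintegral_mono_set hst)
  rw [ENNReal.rpow_two, ← ofReal_norm, ENNReal.ofReal_pow (norm_nonneg _)]

theorem intermediate_value_H1_general {E : Type*} [NormedAddCommGroup E] [InnerProductSpace ℝ E]
    [FiniteDimensional ℝ E] [Nontrivial E] [MeasurableSpace E] [BorelSpace E] {R : ℝ} (hR : 0 < R)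
    {u : E → ℝ} (hu : DifferentiableOn ℝ u (ball 0 R)) {k l : ℝ} (hkl : k ≤ l)
    (hint : IntegrableOn (fun x => ‖fderiv ℝ u x‖ ^ 2) (ball 0 R ∩ {x | k < u x})) :
    (l - k) * volume.real {x ∈ ball (0 : E) R | u x ≤ k}
        * volume.real {x ∈ ball (0 : E) R | l ≤ u x}
      ≤ R * volume.real (ball (0 : E) R)
        * volume.real {x ∈ ball (0 : E) R | k < u x ∧ u x < l} ^ (1 / 2 : ℝ)
        * (∫ x in ball (0 : E) R ∩ {x | k < u x}, ‖fderiv ℝ u x‖ ^ 2) ^ (1 / 2 : ℝ) := by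
  have hslab : {x ∈ ball (0 : E) R | k < u x ∧ u x < l} ⊆ ball (0 : E) R ∩ {x | k < u x} :=
    fun x hx => ⟨hx.1, hx.2.1⟩
  have hfinite : volume {x ∈ ball (0 : E) R | k < u x ∧ u x < l} ≠ ⊤ :=
    measure_ne_top_of_subset (sep_subset _ _) measure_ball_lt_top.ne
  have hCauchySchwarz := setLIntegral_enorm_le_rpow_mul_rpow hslab
    (measurable_fderiv ℝ u).enorm.aemeasurable hint
  have h := (ofReal_sub_mul_volume_mul_volume_le hR hu k l).trans
    (mul_le_mul_right hCauchySchwarz _)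
  have hreal := ENNReal.toReal_mono (by finiteness) h
  simp only [ENNReal.toReal_mul, ENNReal.toReal_ofReal (sub_nonneg.2 hkl),
    ENNReal.toReal_ofReal hR.le, ← ENNReal.toReal_rpow,
    ENNReal.toReal_ofReal (integral_nonneg fun x => sq_nonneg ‖fderiv ℝ u x‖)] at hreal
  rwa [← mul_assoc] at hreal

/-- **Intermediate value lemma in H¹.** For `u` continuously differentiable on `B_R` with
square-integrable gradient, and `k ≤ l`,
`(l-k) |{u ≤ k} ∩ B_R| |{u ≥ l} ∩ B_R|
  ≤ R |B_R| |{k < u < l} ∩ B_R|^{1/2} (∫_{B_R ∩ {u > k}} |∇u|²)^{1/2}`. -/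
theorem intermediate_value_H1 (d : ℕ) (hd : 1 ≤ d) (R : ℝ) (hR : 0 < R)
    (u : Euc d → ℝ) (hu : ContDiffOn ℝ 1 u (ball (0 : Euc d) R))
    (hgrad : IntegrableOn (fun x => ‖gradient u x‖ ^ 2) (ball (0 : Euc d) R))
    (k l : ℝ) (hkl : k ≤ l) :
    (l - k) * (volume {x ∈ ball (0 : Euc d) R | u x ≤ k}).toReal
        * (volume {x ∈ ball (0 : Euc d) R | l ≤ u x}).toReal
      ≤ R * (volume (ball (0 : Euc d) R)).toReal
        * (volume {x ∈ ball (0 : Euc d) R | k < u x ∧ u x < l}).toReal ^ ((1 : ℝ) / 2)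
        * (∫ x in ball (0 : Euc d) R ∩ {x | k < u x}, ‖gradient u x‖ ^ 2) ^ ((1 : ℝ) / 2) := by
  have : NeZero d := ⟨Nat.one_le_iff_ne_zero.1 hd⟩
  simp only [gradient, LinearIsometryEquiv.norm_map] at hgrad ⊢
  exact intermediate_value_H1_general hR (hu.differentiableOn one_ne_zero) hkl
    (hgrad.mono_set inter_subset_left)
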